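/- Let α, β > 0 satisfy α·β = π². Then Σ_{n=1}^{∞} 1/( n·(e^{2nα} − 1) ) − Σ_{n=1}^{∞} 1/( n·(e^{2nβ} − 1) ) = (β − α)/12 + (1/4)·log(α/β). -/

import Mathlib

/-!
Expanding `log (1 - q ^ m)` and summing the double series `∑ q ^ (m n) / n` over `m` first gives
`∏ (1 - q ^ m) = exp (-∑ q ^ n / (n (1 - q ^ n)))`. At `q = exp (-2 α)` this says that
`-α / 12 - ∑ 1 / (n (exp (2 n α) - 1))` is a logarithm of `η (i α / π)`. The involution
`α ↦ π² / α` is `z ↦ -1 / z` for `z = i α / π`, so the transformation law of `η` yields the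
identity up to a multiple of `2 π i`; both sides are continuous on the half-plane `0 < re α` and
agree at `α = π`, so this multiple vanishes.
-/

open Complex Function.Periodic ModularForm

/-- The series `∑ q ^ n / (n (1 - q ^ n))` over `n ≥ 1`, indexed from `0`: the Lambert series of
the coefficients `1 / n`, which is minus the logarithm of the Euler product `∏ (1 - q ^ n)`. -/
noncomputable def lambertSeries (q : ℂ) : ℂ :=
  ∑' n : ℕ, q ^ (n + 1) / ((n + 1) * (1 - q ^ (n + 1)))

section LambertSeries

variable {q : ℂ}

lemma norm_pow_lt_one (hq : ‖q‖ < 1) (n : ℕ) : ‖q ^ (n + 1)‖ < 1 := by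
  rw [norm_pow]
  exact pow_lt_one₀ (norm_nonneg q) hq n.succ_ne_zero

lemma norm_pow_pow_div_le {r : ℝ} (hqr : ‖q‖ ≤ r) (hr : r ≤ 1) (m n : ℕ) :
    ‖(q ^ (m + 1)) ^ (n + 1) / ((n : ℂ) + 1)‖ ≤ r ^ m * r ^ n := by
  have hr0 : 0 ≤ r := (norm_nonneg q).trans hqr
  have hn : ‖(n : ℂ) + 1‖ = n + 1 := by exact_mod_cast Complex.norm_natCast (n + 1)
  calc ‖(q ^ (m + 1)) ^ (n + 1) / ((n : ℂ) + 1)‖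
      ≤ ‖(q ^ (m + 1)) ^ (n + 1)‖ := by
        rw [norm_div, hn]
        exact div_le_self (norm_nonneg _) (by simp)
    _ ≤ r ^ ((m + 1) * (n + 1)) := by
        rw [← pow_mul, norm_pow]
        gcongr
    _ ≤ r ^ (m + n) := pow_le_pow_of_le_one hr0 hr (by nlinarith)
    _ = r ^ m * r ^ n := pow_add r m n

lemma summable_pow_mul_pow {r : ℝ} (hr0 : 0 ≤ r) (hr : r < 1) :
    Summable fun p : ℕ × ℕ ↦ r ^ p.1 * r ^ p.2 :=
  have hgeom := summable_geometric_of_lt_one hr0 hr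
  hgeom.mul_of_nonneg hgeom (fun _ ↦ pow_nonneg hr0 _) (fun _ ↦ pow_nonneg hr0 _)

lemma summable_pow_pow_div (hq : ‖q‖ < 1) :
    Summable fun p : ℕ × ℕ ↦ (q ^ (p.1 + 1)) ^ (p.2 + 1) / ((p.2 : ℂ) + 1) :=
  (summable_pow_mul_pow (norm_nonneg q) hq).of_norm_bounded
    fun p ↦ norm_pow_pow_div_le le_rfl hq.le p.1 p.2

lemma tsum_pow_pow_div (hq : ‖q‖ < 1) (n : ℕ) :
    ∑' m : ℕ, (q ^ (m + 1)) ^ (n + 1) / ((n : ℂ) + 1) =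
      q ^ (n + 1) / ((n + 1) * (1 - q ^ (n + 1))) := by
  have hterm (m : ℕ) : (q ^ (m + 1)) ^ (n + 1) / ((n : ℂ) + 1) =
      q ^ (n + 1) / (n + 1) * (q ^ (n + 1)) ^ m := by
    ring
  simp_rw [hterm]
  rw [tsum_mul_left, tsum_geometric_of_norm_lt_one (norm_pow_lt_one hq n), ← div_eq_mul_inv,
    div_div]

lemma tsum_prod_pow_pow_div (hq : ‖q‖ < 1) :
    ∑' p : ℕ × ℕ, (q ^ (p.1 + 1)) ^ (p.2 + 1) / ((p.2 : ℂ) + 1) = lambertSeries q := by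
  have hsum := summable_pow_pow_div hq
  calc ∑' p : ℕ × ℕ, (q ^ (p.1 + 1)) ^ (p.2 + 1) / ((p.2 : ℂ) + 1)
      = ∑' m : ℕ, ∑' n : ℕ, (q ^ (m + 1)) ^ (n + 1) / ((n : ℂ) + 1) := hsum.tsum_prod
    _ = ∑' n : ℕ, ∑' m : ℕ, (q ^ (m + 1)) ^ (n + 1) / ((n : ℂ) + 1) :=
        hsum.tsum_comm (f := fun m n : ℕ ↦ (q ^ (m + 1)) ^ (n + 1) / ((n : ℂ) + 1)) |>.symm
    _ = lambertSeries q := tsum_congr (tsum_pow_pow_div hq)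

lemma hasSum_log_one_sub_pow (hq : ‖q‖ < 1) :
    HasSum (fun m : ℕ ↦ log (1 - q ^ (m + 1))) (-lambertSeries q) := by
  have hdouble := (summable_pow_pow_div hq).hasSum
  rw [tsum_prod_pow_pow_div hq] at hdouble
  have hrow (m : ℕ) : HasSum (fun n : ℕ ↦ (q ^ (m + 1)) ^ (n + 1) / ((n : ℂ) + 1))
      (-log (1 - q ^ (m + 1))) :=
    hasSum_taylorSeries_neg_log' (norm_pow_lt_one hq m)
  simpa only [neg_neg] using (hdouble.prod_fiberwise hrow).neg

lemma tprod_one_sub_pow (hq : ‖q‖ < 1) :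
    ∏' m : ℕ, (1 - q ^ (m + 1)) = exp (-lambertSeries q) := by
  have hne (m : ℕ) : 1 - q ^ (m + 1) ≠ 0 := fun h ↦ by
    simpa [← sub_eq_zero.mp h] using norm_pow_lt_one hq m
  exact (hasProd_of_hasSum_log hne (hasSum_log_one_sub_pow hq)).tprod_eq

lemma continuousOn_lambertSeries : ContinuousOn lambertSeries (Metric.ball 0 1) := by
  suffices hball : ∀ r, 0 ≤ r → r < 1 → ContinuousOn lambertSeries (Metric.ball 0 r) by
    refine fun q hq ↦ ContinuousAt.continuousWithinAt ?_
    obtain ⟨r, hqr, hr⟩ := exists_between (mem_ball_zero_iff.mp hq)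
    exact (hball r ((norm_nonneg q).trans hqr.le) hr).continuousAt
      (Metric.isOpen_ball.mem_nhds (mem_ball_zero_iff.mpr hqr))
  intro r hr0 hr
  refine ContinuousOn.congr ?_ fun q hq ↦
    (tsum_prod_pow_pow_div ((mem_ball_zero_iff.mp hq).trans hr)).symm
  exact continuousOn_tsum (fun p ↦ by fun_prop) (summable_pow_mul_pow hr0 hr)
    fun p q hq ↦ norm_pow_pow_div_le (mem_ball_zero_iff.mp hq).le hr.le p.1 p.2

lemma lambertSeries_exp_neg (w : ℂ) :
    lambertSeries (exp (-w)) = ∑' n : ℕ, 1 / (((n : ℂ) + 1) * (exp ((n + 1) * w) - 1)) := by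
  refine tsum_congr fun n ↦ ?_
  have hpow : exp (-w) ^ (n + 1) = (exp ((n + 1) * w))⁻¹ := by
    rw [← exp_nat_mul, ← exp_neg]
    push_cast
    ring_nf
  have hne := exp_ne_zero ((n + 1) * w)
  have hsub : 1 - (exp ((n + 1) * w))⁻¹ = (exp ((n + 1) * w) - 1) * (exp ((n + 1) * w))⁻¹ := by
    rw [sub_mul, mul_inv_cancel₀ hne, one_mul]
  rw [hpow, hsub, ← mul_assoc, div_mul_cancel_right₀ (inv_ne_zero hne), one_div]

end LambertSeries

lemma eta_eq_qParam_mul_exp {z : ℂ} (hz : 0 < z.im) :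
    η z = qParam 24 z * exp (-lambertSeries (qParam 1 z)) := by
  rw [ModularForm.eta, tprod_one_sub_pow (norm_qParam_lt_one one_pos hz)]

section RightHalfPlane

variable {t : ℂ}

lemma re_inv_pos (ht : 0 < t.re) : 0 < t⁻¹.re := by
  rw [inv_re]
  exact div_pos ht (normSq_pos.mpr (ne_zero_of_re_pos ht))

lemma log_sq_of_re_pos (ht : 0 < t.re) : log (t ^ 2) = 2 * log t := by
  have harg := abs_lt.mp (abs_arg_lt_pi_div_two_iff.mpr (.inl ht))
  have ht0 := ne_zero_of_re_pos ht
  rw [sq, log_mul ht0 ht0 ⟨by linarith, by linarith⟩, two_mul]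

lemma sqrt_mul_I_of_re_pos (ht : 0 < t.re) : sqrt (t * I) = sqrt t * sqrt I := by
  have harg := abs_lt.mp (abs_arg_lt_pi_div_two_iff.mpr (.inl ht))
  have ht0 := ne_zero_of_re_pos ht
  have hlog : log (t * I) = log t + log I :=
    log_mul ht0 I_ne_zero (by rw [arg_I]; constructor <;> linarith [Real.pi_pos])
  rw [sqrt_eq_exp (mul_ne_zero ht0 I_ne_zero), sqrt_eq_exp ht0, sqrt_eq_exp I_ne_zero, hlog,
    add_div, exp_add]

lemma eta_inv_mul_I (ht : 0 < t.re) : η (t⁻¹ * I) = sqrt t * η (t * I) := by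
  have hz : t * I ∈ UpperHalfPlane.upperHalfPlaneSet := by
    simpa [UpperHalfPlane.upperHalfPlaneSet] using ht
  have hinv : -1 / (t * I) = t⁻¹ * I := by
    rw [neg_div, one_div, mul_inv, inv_I, mul_neg, neg_neg]
  have hI : sqrt I ≠ 0 := by
    rw [sqrt_eq_exp I_ne_zero]
    exact exp_ne_zero _
  calc η (t⁻¹ * I) = (sqrt I)⁻¹ * (sqrt (t * I) * η (t * I)) := by
        simpa [hinv] using eta_comp_eq_csqrt_I_inv hz
    _ = sqrt t * η (t * I) := by
        rw [sqrt_mul_I_of_re_pos ht]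
        field_simp

/-- The logarithm of `t ↦ η (i t)` on the half-plane `0 < re t` that is real for real `t`. -/
noncomputable def logEta (t : ℂ) : ℂ :=
  -(Real.pi * t) / 12 - lambertSeries (qParam 1 (t * I))

lemma exp_logEta (ht : 0 < t.re) : exp (logEta t) = η (t * I) := by
  have hq : qParam 24 (t * I) = exp (-(Real.pi * t) / 12) := by
    rw [qParam]
    congr 1
    push_cast
    linear_combination (Real.pi * t / 12 : ℂ) * I_sq
  rw [eta_eq_qParam_mul_exp (by simpa using ht), hq, logEta, sub_eq_add_neg, exp_add]

lemma continuousOn_logEta : ContinuousOn logEta {t | 0 < t.re} := by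
  refine ContinuousOn.sub (by fun_prop) (continuousOn_lambertSeries.comp
    (continuous_qParam.comp (continuous_mul_const I)).continuousOn fun t ht ↦ ?_)
  exact mem_ball_zero_iff.mpr (norm_qParam_lt_one one_pos (by simpa using ht))

lemma logEta_inv (ht : 0 < t.re) : logEta t⁻¹ = log t / 2 + logEta t := by
  have hleft : ContinuousOn (fun s : ℂ ↦ logEta s⁻¹) {s | 0 < s.re} :=
    continuousOn_logEta.comp (continuousOn_inv₀.mono fun _ ↦ ne_zero_of_re_pos)
      fun _ ↦ re_inv_pos
  have hright : ContinuousOn (fun s : ℂ ↦ log s / 2 + logEta s) {s | 0 < s.re} :=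
    ((continuousOn_id.clog fun _ hs ↦ .inl hs).div_const 2).add continuousOn_logEta
  have hexp (s : ℂ) (hs : 0 < s.re) : exp (logEta s⁻¹) = exp (log s / 2 + logEta s) := by
    rw [exp_add, exp_logEta hs, exp_logEta (re_inv_pos hs), eta_inv_mul_I hs,
      sqrt_eq_exp (ne_zero_of_re_pos hs)]
  exact isCoveringMap_exp.eqOn_of_comp_eqOn (convex_halfSpace_re_gt 0).isPreconnected hleft hright
    (fun s hs ↦ Subtype.ext (hexp s hs)) (a := 1) (by simp) (by simp) ht

end RightHalfPlane

lemma logEta_div_pi (α : ℂ) : logEta (α / Real.pi) =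
    -α / 12 - ∑' n : ℕ, 1 / (((n : ℂ) + 1) * (exp (2 * (n + 1) * α) - 1)) := by
  have hπ : (Real.pi : ℂ) ≠ 0 := ofReal_ne_zero.mpr Real.pi_ne_zero
  have hq : qParam 1 (α / Real.pi * I) = exp (-(2 * α)) := by
    rw [qParam]
    congr 1
    field_simp
    simp
  rw [logEta, hq, lambertSeries_exp_neg, mul_div_cancel₀ _ hπ]
  simp only [mul_left_comm _ (2 : ℂ), mul_assoc]

theorem stmt7_general (α β : ℂ) (hα : 0 < α.re) (hαβ : α * β = Real.pi ^ 2) :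
    (∑' n : ℕ, 1 / (((n : ℂ) + 1) * (exp (2 * ((n : ℂ) + 1) * α) - 1)))
      - ∑' n : ℕ, 1 / (((n : ℂ) + 1) * (exp (2 * ((n : ℂ) + 1) * β) - 1))
    = (β - α) / 12 + (1 / 4) * log (α / β) := by
  have hπ : (Real.pi : ℂ) ≠ 0 := ofReal_ne_zero.mpr Real.pi_ne_zero
  have hα0 : α ≠ 0 := ne_zero_of_re_pos hα
  have hβ : β = Real.pi ^ 2 / α := by rw [← hαβ, mul_div_cancel_left₀ _ hα0]
  have hre : 0 < (α / Real.pi).re := by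
    rw [div_ofReal_re]
    exact div_pos hα Real.pi_pos
  have hinv : (α / Real.pi)⁻¹ = β / Real.pi := by
    rw [hβ]
    field_simp
  have hlog : log (α / β) = 2 * log (α / Real.pi) := by
    rw [← log_sq_of_re_pos hre, hβ]
    field_simp
  have hη := logEta_inv hre
  rw [hinv, logEta_div_pi, logEta_div_pi] at hη
  rw [hlog]
  linear_combination hη

theorem stmt7 (α β : ℝ) (hα : 0 < α) (hβ : 0 < β) (hαβ : α * β = Real.pi ^ 2) :
    (∑' n : ℕ, 1 / (((n : ℝ) + 1) * (Real.exp (2 * ((n : ℝ) + 1) * α) - 1)))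
      - ∑' n : ℕ, 1 / (((n : ℝ) + 1) * (Real.exp (2 * ((n : ℝ) + 1) * β) - 1))
    = (β - α) / 12 + (1 / 4) * Real.log (α / β) := by
  have h := stmt7_general α β (by simpa using hα) (by exact_mod_cast hαβ)
  rw [← ofReal_div, ← ofReal_log (by positivity)] at h
  apply ofReal_injective
  push_cast
  exact h
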